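/- arXiv:1609.08544 — 2 statements merged into one kernel-verified Lean document; each statement's English description precedes it below -/
import Mathlib

section
/- For every subset A ⊆ ℕ^m there exists a quasi-polynomial χ of degree at most m such that χ(r) equals the cardinality of V_A^{(w)}(r) for all sufficiently large r ∈ ℕ. -/
/-- The weighted order of a point `a ∈ ℕ^m`: `ord_w a = w₁a₁ + ⋯ + w_m a_m`. -/
def ordw {m : ℕ} (w : Fin m → ℕ) (a : Fin m → ℕ) : ℕ := ∑ i, w i * a i

/-- `V_A`: the set of `v ∈ ℕ^m` that do not exceed (w.r.t. the product order)
any element of `A`. -/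
def VA {m : ℕ} (A : Set (Fin m → ℕ)) : Set (Fin m → ℕ) := {v | ∀ a ∈ A, ¬ a ≤ v}

/-- `V_A^{(w)}(r)`: elements of `V_A` of weighted order at most `r`. -/
def VAw {m : ℕ} (w : Fin m → ℕ) (A : Set (Fin m → ℕ)) (r : ℕ) : Set (Fin m → ℕ) :=
  {v ∈ VA A | ordw w v ≤ r}

/-!
Let `E` be the shift `(E f)(r) = f (r + 1)`, and let `h` count the points of order at most `r` in a
lower set `L ⊆ ℕ^m`. Splitting `L` according to whether the first coordinate vanishes gives
`E ^ w₁ h = h₁ + E ^ w₁ h₀`, where `h₁` belongs to the translate `{v | v + e₁ ∈ L} ⊆ L` and `h₀` to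
the slice `v₁ = 0`. If the translate is `L` itself, `(E ^ w₁ - 1) h` is a shift of `h₀` and `m`
drops; otherwise the lower set shrinks, which by Dickson's lemma cannot go on forever. Hence
`(E - 1) ∏ᵢ (E ^ wᵢ - 1)` kills `h` at all large arguments, and so does its multiple
`(E ^ q - 1) ^ (m + 1)` with `q = ∏ᵢ wᵢ`. So along each residue class modulo `q` the `(m + 1)`-st
difference of `h` is eventually zero, and Newton's formula makes `h` a polynomial of degree at most
`m` there.
-/

open Filter Polynomial fwdDiff_aux
open scoped Nat

section Shift

variable {G : Type*} [AddCommGroup G]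

lemma aeval_shift_X_pow (k : ℕ) (f : ℕ → G) :
    aeval (shiftₗ ℕ G 1) (X ^ k : ℤ[X]) f = fun r ↦ f (r + k) := by
  ext r
  rw [aeval_X_pow, shiftₗ_pow_apply, smul_eq_mul, mul_one]

lemma aeval_shift_mul (p q : ℤ[X]) (f : ℕ → G) :
    aeval (shiftₗ ℕ G 1) (p * q) f = aeval (shiftₗ ℕ G 1) p (aeval (shiftₗ ℕ G 1) q f) := by
  rw [aeval_mul, Module.End.mul_apply]

lemma aeval_shift_eq_zero_of_le {f : ℕ → G} {N : ℕ} (hf : ∀ r, N ≤ r → f r = 0) (p : ℤ[X])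
    {r : ℕ} (hr : N ≤ r) : aeval (shiftₗ ℕ G 1) p f r = 0 := by
  simp only [aeval_eq_sum_range, LinearMap.sum_apply, LinearMap.smul_apply, Finset.sum_apply,
    Pi.smul_apply, shiftₗ_pow_apply]
  exact Finset.sum_eq_zero fun i _ ↦ by rw [hf _ (hr.trans (r.le_add_right _)), smul_zero]

lemma aeval_shift_X_pow_sub_one (q : ℕ) :
    aeval (shiftₗ ℕ G 1) (X ^ q - 1 : ℤ[X]) = fwdDiffₗ ℕ G q := by
  refine LinearMap.ext fun f ↦ ?_
  rw [map_sub, LinearMap.sub_apply, aeval_shift_X_pow, map_one]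
  rfl

lemma aeval_shift_X_pow_sub_one_pow (q n : ℕ) (f : ℕ → G) :
    aeval (shiftₗ ℕ G 1) ((X ^ q - 1) ^ n : ℤ[X]) f = (fwdDiff q)^[n] f := by
  rw [map_pow, aeval_shift_X_pow_sub_one, coe_fwdDiffₗ_pow]

/-- The linear recurrence `p(E) f = 0`, where `E = shiftₗ ℕ G 1` is the shift
`(E f)(r) = f (r + 1)`, holds at all sufficiently large arguments. -/
def EventuallyAnnihilates (p : ℤ[X]) (f : ℕ → G) : Prop :=
  ∀ᶠ r in atTop, aeval (shiftₗ ℕ G 1) p f r = 0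

namespace EventuallyAnnihilates

variable {p q : ℤ[X]} {f g : ℕ → G}

lemma add (hf : EventuallyAnnihilates p f) (hg : EventuallyAnnihilates p g) :
    EventuallyAnnihilates p (f + g) := by
  filter_upwards [hf, hg] with r hfr hgr
  rw [map_add, Pi.add_apply, hfr, hgr, add_zero]

lemma of_dvd (hf : EventuallyAnnihilates p f) (hpq : p ∣ q) : EventuallyAnnihilates q f := by
  obtain ⟨c, rfl⟩ := hpq
  obtain ⟨N, hN⟩ := eventually_atTop.mp hf
  filter_upwards [eventually_ge_atTop N] with r hr
  rw [mul_comm, aeval_shift_mul]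
  exact aeval_shift_eq_zero_of_le hN c hr

lemma mul_iff :
    EventuallyAnnihilates (p * q) f ↔ EventuallyAnnihilates p (aeval (shiftₗ ℕ G 1) q f) := by
  simp only [EventuallyAnnihilates, aeval_shift_mul]

lemma comp_add_iff (k : ℕ) :
    EventuallyAnnihilates p (fun r ↦ f (r + k)) ↔ EventuallyAnnihilates p f := by
  rw [← aeval_shift_X_pow, ← mul_iff, mul_comm, EventuallyAnnihilates, aeval_shift_mul,
    aeval_shift_X_pow, ← eventually_map (m := (· + k)) (P := (aeval (shiftₗ ℕ G 1) p f · = 0)),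
    map_add_atTop_eq_nat]
  rfl

end EventuallyAnnihilates

end Shift

section Newton

variable {K : Type*} [Field K] [CharZero K]

theorem exists_polynomial_of_fwdDiff_iter_eq_zero {M : Type*} [AddCommMonoid M] {f : M → K}
    {h b : M} {d : ℕ} (hf : ∀ k, d < k → (fwdDiff h)^[k] f b = 0) :
    ∃ P : K[X], P.natDegree ≤ d ∧ ∀ n : ℕ, f (b + n • h) = P.eval (n : K) := by
  refine ⟨∑ k ∈ Finset.range (d + 1), C ((fwdDiff h)^[k] f b / k !) * descPochhammer K k,
    natDegree_sum_le_of_forall_le _ _ fun k hk ↦ ?_, fun n ↦ ?_⟩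
  · rw [Finset.mem_range_succ_iff] at hk
    exact (natDegree_C_mul_le _ _).trans ((descPochhammer_natDegree K k).trans_le hk)
  · calc f (b + n • h)
        = ∑ k ∈ Finset.range (n + 1), n.choose k • (fwdDiff h)^[k] f b :=
          shift_eq_sum_fwdDiff_iter ..
      _ = ∑ k ∈ Finset.range (n + d + 1), n.choose k • (fwdDiff h)^[k] f b := by
          refine Finset.sum_subset (Finset.range_mono (by lia)) fun k _ hk ↦ ?_
          rw [Nat.choose_eq_zero_of_lt (by simpa using hk), zero_smul]
      _ = ∑ k ∈ Finset.range (d + 1), n.choose k • (fwdDiff h)^[k] f b := by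
          refine (Finset.sum_subset (Finset.range_mono (by lia)) fun k _ hk ↦ ?_).symm
          rw [hf k (by simpa using hk), smul_zero]
      _ = _ := by
          rw [eval_finsetSum]
          refine Finset.sum_congr rfl fun k _ ↦ ?_
          rw [eval_C_mul, nsmul_eq_mul, Nat.cast_choose_eq_descPochhammer_div]
          ring

theorem exists_polynomial_eval_cast_of_fwdDiff_iter_eq_zero {f : ℕ → K} {q b d : ℕ} (hq : q ≠ 0)
    (hf : ∀ k, d < k → (fwdDiff q)^[k] f b = 0) :
    ∃ P : K[X], P.natDegree ≤ d ∧ ∀ n : ℕ, f (b + n * q) = P.eval ((b + n * q : ℕ) : K) := by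
  obtain ⟨P, hPdeg, hP⟩ := exists_polynomial_of_fwdDiff_iter_eq_zero hf
  refine ⟨P.comp (C (q : K)⁻¹ * (X - C (b : K))), ?_, fun n ↦ ?_⟩
  · calc _ ≤ P.natDegree * (C (q : K)⁻¹ * (X - C (b : K))).natDegree := natDegree_comp_le
      _ ≤ d * 1 := Nat.mul_le_mul hPdeg <|
          (natDegree_C_mul_le _ _).trans (natDegree_X_sub_C _).le
      _ = d := mul_one d
  · have index_eq : (q : K)⁻¹ * ((b + n * q : ℕ) - b) = n := by
      rw [Nat.cast_add, add_sub_cancel_left, Nat.cast_mul, mul_comm,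
        mul_inv_cancel_right₀ (Nat.cast_ne_zero.mpr hq)]
    simp only [eval_comp, eval_mul, eval_sub, eval_C, eval_X, index_eq]
    exact hP n

theorem EventuallyAnnihilates.exists_quasipolynomial {f : ℕ → K} {q d : ℕ} (hq : 0 < q)
    (hf : EventuallyAnnihilates ((X ^ q - 1) ^ (d + 1)) f) :
    ∃ g : ℕ → K[X], (∀ i, (g i).natDegree ≤ d) ∧
      ∀ᶠ r : ℕ in atTop, f r = (g (r % q)).eval (r : K) := by
  obtain ⟨N, hN⟩ := eventually_atTop.mp hf
  have fwdDiff_eq_zero (i k : ℕ) (hk : d < k) : (fwdDiff q)^[k] f (i + N * q) = 0 := by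
    rw [← aeval_shift_X_pow_sub_one_pow, ← Nat.sub_add_cancel hk, pow_add, aeval_shift_mul]
    exact aeval_shift_eq_zero_of_le hN _ (Nat.le_add_left_of_le (Nat.le_mul_of_pos_right N hq))
  choose g hgdeg hg using fun i ↦
    exists_polynomial_eval_cast_of_fwdDiff_iter_eq_zero hq.ne' (fwdDiff_eq_zero i)
  refine ⟨g, hgdeg, ?_⟩
  filter_upwards [eventually_ge_atTop (N * q)] with r hr
  obtain ⟨n, hn⟩ : ∃ n, r / q = N + n :=
    Nat.exists_eq_add_of_le ((Nat.le_div_iff_mul_le hq).mpr hr)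
  have hr_eq : r % q + N * q + n * q = r := by
    rw [add_assoc, ← add_mul, ← hn, mul_comm, Nat.mod_add_div]
  simpa only [hr_eq] using hg (r % q) n

end Newton

instance lowerSet_wellFoundedLT {α : Type*} [Preorder α] [WellQuasiOrderedLE α] :
    WellFoundedLT (LowerSet α) := by
  refine ⟨RelEmbedding.wellFounded_iff_isEmpty.mpr ⟨fun L ↦ ?_⟩⟩
  have L_anti : StrictAnti L := fun i j hij ↦ L.map_rel_iff.mpr hij
  choose x hx hx' using fun n ↦
    Set.exists_of_ssubset (LowerSet.coe_ssubset_coe.mpr (L_anti (Nat.lt_succ_self n)))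
  obtain ⟨i, j, hij, hle⟩ := wellQuasiOrdered_le x
  exact hx' i ((L (i + 1)).lower hle (L_anti.antitone hij (hx j)))

section Counting

variable {m : ℕ}

/-- The number of points of `S` of weighted order at most `r`; for `S = V_A` this is the
cardinality of `V_A^{(w)}(r)`. -/
noncomputable def hilbertFunction (w : Fin m → ℕ) (S : Set (Fin m → ℕ)) (r : ℕ) : ℕ :=
  {v ∈ S | ordw w v ≤ r}.ncard

lemma finite_setOf_ordw_le {w : Fin m → ℕ} (hw : ∀ i, 0 < w i) (r : ℕ) :
    {v | ordw w v ≤ r}.Finite := by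
  refine (Set.finite_Iic fun _ ↦ r).subset fun v hv i ↦ ?_
  calc v i ≤ w i * v i := Nat.le_mul_of_pos_left _ (hw i)
    _ ≤ ordw w v := Finset.single_le_sum (f := fun i ↦ w i * v i) (by simp) (Finset.mem_univ i)
    _ ≤ r := hv

lemma ordw_add_single (w v : Fin m → ℕ) (i : Fin m) :
    ordw w (v + Pi.single i 1) = ordw w v + w i := by
  simp [ordw, mul_add, Finset.sum_add_distrib, Pi.single_apply]

lemma ordw_cons_zero (w : Fin (m + 1) → ℕ) (v : Fin m → ℕ) :
    ordw w (Fin.cons 0 v) = ordw (Fin.tail w) v := by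
  simp [ordw, Fin.sum_univ_succ, Fin.tail]

lemma range_cons_zero : Set.range (Fin.cons (n := m) (α := fun _ ↦ ℕ) 0) = {v | v 0 = 0} := by
  ext v
  constructor
  · rintro ⟨u, rfl⟩
    rfl
  · intro hv
    exact ⟨Fin.tail v, by rw [← show v 0 = 0 from hv, Fin.cons_self_tail]⟩

lemma range_add_single (i : Fin m) :
    Set.range (fun v : Fin m → ℕ ↦ v + Pi.single i 1) = {v | v i = 0}ᶜ := by
  ext v
  constructor
  · rintro ⟨u, rfl⟩
    simp
  · intro hv
    refine ⟨v - Pi.single i 1, tsub_add_cancel_of_le fun j ↦ ?_⟩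
    obtain rfl | hj := eq_or_ne j i
    · simpa [Nat.one_le_iff_ne_zero] using hv
    · simp [hj]

theorem hilbertFunction_add_weight_zero {w : Fin (m + 1) → ℕ} (hw : ∀ i, 0 < w i)
    (S : Set (Fin (m + 1) → ℕ)) (r : ℕ) :
    hilbertFunction w S (r + w 0) =
      hilbertFunction w ((· + Pi.single 0 1) ⁻¹' S) r +
        hilbertFunction (Fin.tail w) (Fin.cons (α := fun _ ↦ ℕ) 0 ⁻¹' S) (r + w 0) := by
  set T := {v ∈ S | ordw w v ≤ r + w 0} with hT
  have T_finite : T.Finite := (finite_setOf_ordw_le hw _).subset fun v hv ↦ hv.2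
  have card_pos : hilbertFunction w ((· + Pi.single 0 1) ⁻¹' S) r = (T \ {v | v 0 = 0}).ncard := by
    rw [Set.sdiff_eq, ← range_add_single, ← Set.image_preimage_eq_inter_range,
      Set.ncard_image_of_injective _ (add_left_injective _)]
    simp [hilbertFunction, hT, ordw_add_single]
  have card_zero : hilbertFunction (Fin.tail w) (Fin.cons (α := fun _ ↦ ℕ) 0 ⁻¹' S) (r + w 0) =
      (T ∩ {v | v 0 = 0}).ncard := by
    rw [← range_cons_zero, ← Set.image_preimage_eq_inter_range,
      Set.ncard_image_of_injective _ (Fin.cons_right_injective (α := fun _ ↦ ℕ) 0)]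
    simp [hilbertFunction, hT, ordw_cons_zero]
  rw [card_pos, card_zero, add_comm (Set.ncard _),
    Set.ncard_inter_add_ncard_sdiff_eq_ncard _ _ T_finite, hilbertFunction]

/-- The characteristic polynomial of the linear recurrence eventually satisfied by the Hilbert
functions of weight `w`. It is, up to sign and reversal, the denominator `(1 - t) ∏ᵢ (1 - t ^ wᵢ)`
of their generating functions. -/
noncomputable def hilbertCharpoly (w : Fin m → ℕ) : ℤ[X] := (X - 1) * ∏ i, (X ^ w i - 1)

lemma hilbertCharpoly_succ (w : Fin (m + 1) → ℕ) :
    hilbertCharpoly w = hilbertCharpoly (Fin.tail w) * (X ^ w 0 - 1) := by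
  rw [hilbertCharpoly, Fin.prod_univ_succ, hilbertCharpoly, mul_comm (X ^ w 0 - 1), mul_assoc]
  rfl

lemma hilbertCharpoly_dvd (w : Fin m → ℕ) :
    hilbertCharpoly w ∣ (X ^ (∏ i, w i) - 1) ^ (m + 1) := by
  rw [pow_succ' (_ - 1), hilbertCharpoly]
  refine mul_dvd_mul (sub_one_dvd_pow_sub_one X _) ?_
  calc ∏ i, (X ^ w i - 1 : ℤ[X]) ∣ ∏ _i : Fin m, (X ^ (∏ j, w j) - 1) :=
        Finset.prod_dvd_prod_of_dvd _ _ fun i hi ↦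
          dvd_pow_sub_one_of_dvd (Finset.dvd_prod_of_mem w hi)
    _ = (X ^ (∏ j, w j) - 1) ^ m := Fin.prod_const m _

theorem eventuallyAnnihilates_hilbertCharpoly {R : Type*} [AddCommGroupWithOne R]
    {w : Fin m → ℕ} (hw : ∀ i, 0 < w i) (L : LowerSet (Fin m → ℕ)) :
    EventuallyAnnihilates (hilbertCharpoly w) fun r ↦ (hilbertFunction w L r : R) := by
  induction m with
  | zero =>
    have hilbertFunction_const (r s : ℕ) : hilbertFunction w L r = hilbertFunction w L s := by
      simp [hilbertFunction, ordw]
    have charpoly_eq : hilbertCharpoly w = X ^ 1 - 1 := by simp [hilbertCharpoly]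
    refine Eventually.of_forall fun r ↦ ?_
    rw [charpoly_eq, aeval_shift_X_pow_sub_one, fwdDiffₗ_apply, fwdDiff,
      hilbertFunction_const (r + 1) r, sub_self]
  | succ m ih =>
    induction L using WellFoundedLT.induction with
    | _ L ihL =>
    let L₀ : LowerSet (Fin m → ℕ) :=
      ⟨Fin.cons (α := fun _ ↦ ℕ) 0 ⁻¹' L,
        L.lower.preimage fun _ _ h ↦ Fin.cons_le_cons.mpr ⟨le_rfl, h⟩⟩
    let L₁ : LowerSet (Fin (m + 1) → ℕ) :=
      ⟨(· + Pi.single 0 1) ⁻¹' L, L.lower.preimage fun _ _ h ↦ by gcongr⟩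
    have hL₁ : L₁ ≤ L := fun v hv ↦ L.lower le_self_add hv
    have recurrence (r : ℕ) : (hilbertFunction w L (r + w 0) : R) =
        hilbertFunction w L₁ r + hilbertFunction (Fin.tail w) L₀ (r + w 0) :=
      (congrArg Nat.cast (hilbertFunction_add_weight_zero hw L r)).trans (Nat.cast_add _ _)
    have annihilates₀ : EventuallyAnnihilates (hilbertCharpoly (Fin.tail w))
        fun r ↦ (hilbertFunction (Fin.tail w) L₀ (r + w 0) : R) :=
      (EventuallyAnnihilates.comp_add_iff (w 0)).mpr (ih (fun i ↦ hw i.succ) L₀)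
    rcases hL₁.eq_or_lt with heq | hlt
    · rw [hilbertCharpoly_succ, EventuallyAnnihilates.mul_iff, aeval_shift_X_pow_sub_one]
      convert annihilates₀ using 2 with r
      rw [fwdDiffₗ_apply, fwdDiff, recurrence, heq, add_sub_cancel_left]
    · rw [← EventuallyAnnihilates.comp_add_iff (w 0)]
      simp only [recurrence]
      exact (ihL L₁ hlt).add (annihilates₀.of_dvd ⟨_, hilbertCharpoly_succ w⟩)

end Counting

lemma isLowerSet_VA {m : ℕ} (A : Set (Fin m → ℕ)) : IsLowerSet (VA A) :=
  fun _ _ huv hv a ha hau ↦ hv a ha (hau.trans huv)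

/-- For every subset `A ⊆ ℕ^m` there exists a quasi-polynomial `χ` of degree at most `m`
such that `χ(r) = Card V_A^{(w)}(r)` for all sufficiently large `r`. -/
theorem exists_dimension_quasipolynomial
    (m : ℕ) (hm : 0 < m) (w : Fin m → ℕ) (hw : ∀ i, 0 < w i)
    (A : Set (Fin m → ℕ)) :
    ∃ (q : ℕ) (hq : 0 < q) (g : Fin q → Polynomial ℚ),
      (∀ i : Fin q, (g i).natDegree ≤ m) ∧
      ∃ N : ℕ, ∀ r : ℕ, N ≤ r →
        (Set.ncard (VAw w A r) : ℚ) = (g ⟨r % q, Nat.mod_lt r hq⟩).eval (r : ℚ) := by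
  have recurrence : EventuallyAnnihilates ((X ^ (∏ i, w i) - 1) ^ (m + 1))
      fun r ↦ (hilbertFunction w (VA A) r : ℚ) :=
    (eventuallyAnnihilates_hilbertCharpoly hw ⟨VA A, isLowerSet_VA A⟩).of_dvd
      (hilbertCharpoly_dvd w)
  have hq : 0 < ∏ i, w i := Finset.prod_pos fun i _ ↦ hw i
  obtain ⟨g, hdeg, heq⟩ := recurrence.exists_quasipolynomial hq
  exact ⟨∏ i, w i, hq, fun i ↦ g i, fun i ↦ hdeg i, eventually_atTop.mp heq⟩
end

section
/- Let P ⊆ ℝ^d be a rational polytope of dimension d. Then the counting function L(P, r) = Card(rP ∩ ℤ^d) agrees with a quasi-polynomial whose period divides 𝒟(P) = min{n ∈ ℕ, n ≥ 1 : nP is a lattice polytope}; in particular, if P is itself a lattice polytope, then L(P, r) is a polynomial in r with rational coefficients. -/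
open scoped Pointwise

/-- A lattice polytope in `ℝ^d`: the convex hull of finitely many integer points. -/
def IsLatticePolytope (d : ℕ) (Q : Set (Fin d → ℝ)) : Prop :=
  ∃ V : Finset (Fin d → ℤ),
    Q = convexHull ℝ ((fun v : Fin d → ℤ => fun i => ((v i : ℝ))) '' ↑V)

/-!
Let `D • P` have the lattice vertices `u j`. Every point of `r • P` is a combination `∑ j, φ j • u
j` with `φ ≥ 0` and `D * ∑ j, φ j = r`, and `φ` becomes unique if it is required to be
lexicographically largest. A nonnegative `φ` has this property as soon as some lexicographically
largest vector is nonzero at each `j ≠ 0` where `φ` is. Hence adding natural numbers to `φ 0` and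
to nonzero coordinates of `φ` does not affect it, nor whether the point lies in the lattice, and
the coefficient vectors of lattice points are partitioned into finitely many cells `b + ℕ ^ T`,
where `T` is the support of `b` together with `0`. A cell contributes to `r = ℓ + D * m` the
number of weak compositions of `m` into `#T` parts, where `ℓ = D * ∑ j, b j`. Since `b 0 < 1` and
`b j ≤ 1` for all `j`, one has `ℓ < D * #T`, which makes this count agree with a polynomial on the
residue class of `ℓ` for all `r ≥ 0`, including `r < ℓ`.
-/

/-- `f` is a quasi-polynomial of period `q`: on each residue class modulo `q` it is given by a
polynomial. -/
def IsQuasiPolynomial {R : Type*} [Semiring R] (q : ℕ) (f : ℕ → R) : Prop :=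
  ∃ g : ℕ → Polynomial R, ∀ r, f r = (g (r % q)).eval (r : R)

namespace IsQuasiPolynomial

lemma zero {R : Type*} [Semiring R] (q : ℕ) : IsQuasiPolynomial q fun _ => (0 : R) :=
  ⟨0, by simp⟩

lemma sum {R ι : Type*} [Semiring R] {q : ℕ} {s : Finset ι} {f : ι → ℕ → R}
    (h : ∀ b ∈ s, IsQuasiPolynomial q (f b)) : IsQuasiPolynomial q fun r => ∑ b ∈ s, f b r := by
  choose! g hg using h
  refine ⟨fun i => ∑ b ∈ s, g b i, fun r => ?_⟩
  rw [Polynomial.eval_finsetSum]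
  exact Finset.sum_congr rfl fun b hb => hg b hb r

lemma of_eval_div {K : Type*} [Field K] [CharZero K] {q : ℕ} (hq : 0 < q) {f : ℕ → K}
    (g : ℕ → Polynomial K) (hf : ∀ r, f r = (g (r % q)).eval ((r / q : ℕ) : K)) :
    IsQuasiPolynomial q f := by
  have hq' : (q : K) ≠ 0 := Nat.cast_ne_zero.2 hq.ne'
  refine ⟨fun i => (g i).comp (Polynomial.C (q : K)⁻¹ * (Polynomial.X - Polynomial.C (i : K))),
    fun r => ?_⟩
  have hdiv : (q : K)⁻¹ * (r - (r % q : ℕ)) = (r / q : ℕ) := by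
    rw [inv_mul_eq_iff_eq_mul₀ hq', sub_eq_iff_eq_add]
    exact_mod_cast (Nat.div_add_mod r q).symm
  simp [hf, hdiv]

end IsQuasiPolynomial

section WeakCompositions

lemma card_piAntidiag_nat {ι : Type*} [DecidableEq ι] (T : Finset ι) (m : ℕ) :
    (T.piAntidiag m).card = (T.card + m - 1).choose m := by
  rw [← Finset.card_finsuppAntidiag_nat_eq_choose, Finset.finsuppAntidiag, Finset.card_map,
    Finset.card_attach]

variable {ι : Type*} [Fintype ι] {D ℓ : ℕ} {T : Finset ι}

/-- The weak compositions, with parts indexed by `T` and extended by zero, of the number `m` such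
that `ℓ + D * m = r`; there are none if no such `m` exists. -/
def weakCompositions (T : Finset ι) (D ℓ r : ℕ) : Set (ι → ℕ) :=
  {k | (∀ j, k j ≠ 0 → j ∈ T) ∧ ℓ + D * ∑ j, k j = r}

lemma weakCompositions_add_mul [DecidableEq ι] (hD : 0 < D) (T : Finset ι) (ℓ m : ℕ) :
    weakCompositions T D ℓ (ℓ + D * m) = T.piAntidiag m := by
  ext k
  simp only [weakCompositions, Set.mem_ofPred_eq, Finset.mem_coe, Finset.mem_piAntidiag,
    add_right_inj, mul_right_inj' hD.ne', and_comm (b := _ = m)]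
  refine and_congr_left fun hk => ?_
  rw [Finset.sum_subset T.subset_univ fun j _ hj => not_not.1 (mt (hk j) hj)]

/-- The binomial coefficient vanishes exactly when `r < ℓ`, so that no case distinction on the size
of `r` is left. -/
lemma ncard_weakCompositions (hD : 0 < D) {c : ℕ} (hT : T.card = ℓ / D + c + 1) (r : ℕ) :
    (weakCompositions T D ℓ r).ncard =
      if r % D = ℓ % D then (r / D + c).choose (ℓ / D + c) else 0 := by
  classical
  have hmem : ∀ k ∈ weakCompositions T D ℓ r, r % D = ℓ % D ∧ ℓ ≤ r := by
    rintro k ⟨-, rfl⟩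
    simp
  split_ifs with hmod
  · rcases le_or_gt ℓ r with hle | hlt
    · obtain ⟨m, rfl⟩ : ∃ m, r = ℓ + D * m := by
        obtain ⟨m, hm⟩ := (Nat.modEq_iff_dvd' hle).1 hmod.symm
        exact ⟨m, by omega⟩
      rw [weakCompositions_add_mul hD, Set.ncard_coe_finset, card_piAntidiag_nat, hT,
        Nat.add_mul_div_left _ _ hD, add_right_comm _ 1 m, Nat.add_sub_cancel,
        add_right_comm _ m c, Nat.choose_symm_add]
    · have hdiv_lt : r / D < ℓ / D := by
        by_contra! hge
        have := Nat.mul_le_mul_left D hge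
        have := Nat.div_add_mod r D
        have := Nat.div_add_mod ℓ D
        omega
      rw [Nat.choose_eq_zero_of_lt (by omega), Set.eq_empty_of_forall_notMem
        fun k hk => hlt.not_ge (hmem k hk).2, Set.ncard_empty]
  · rw [Set.eq_empty_of_forall_notMem fun k hk => hmod (hmem k hk).1, Set.ncard_empty]

lemma isQuasiPolynomial_ncard_weakCompositions {K : Type*} [Field K] [CharZero K] (hD : 0 < D)
    (hℓ : ℓ < D * T.card) :
    IsQuasiPolynomial D fun r => ((weakCompositions T D ℓ r).ncard : K) := by
  obtain ⟨c, hc⟩ := Nat.exists_eq_add_of_lt (Nat.div_lt_of_lt_mul hℓ)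
  let g : Polynomial K := Polynomial.C ((ℓ / D + c).factorial : K)⁻¹ *
    (descPochhammer K (ℓ / D + c)).comp (Polynomial.X + Polynomial.C (c : K))
  refine .of_eval_div hD (fun i => if i = ℓ % D then g else 0) fun r => ?_
  rw [ncard_weakCompositions hD hc]
  split_ifs
  · simp [g, Nat.cast_choose_eq_descPochhammer_div, div_eq_inv_mul]
  · simp

end WeakCompositions

section WholePart

variable {ι : Type*}

/-- Rounding down to `ℕ` at `o`, and to the largest natural number strictly below
(or to `0` if there is none) elsewhere. -/
noncomputable def wholePart [DecidableEq ι] (o : ι) (φ : ι → ℝ) : ι → ℕ :=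
  fun j => if j = o then ⌊φ j⌋₊ else ⌈φ j⌉₊ - 1

/-- The complement of `wholePart`. For `φ ≥ 0` it has values in `[0, 1)` at `o` and in `[0, 1]`
elsewhere. -/
noncomputable def fracPart [DecidableEq ι] (o : ι) (φ : ι → ℝ) : ι → ℝ :=
  fun j => φ j - wholePart o φ j

variable {o : ι} {φ : ι → ℝ} {j : ι}

section

variable [DecidableEq ι]

lemma fracPart_add_wholePart (o : ι) (φ : ι → ℝ) (j : ι) :
    fracPart o φ j + wholePart o φ j = φ j :=
  sub_add_cancel _ _

lemma fracPart_nonneg (hφ : 0 ≤ φ) : 0 ≤ fracPart o φ := by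
  refine fun j => sub_nonneg.2 ?_
  rw [wholePart]
  split_ifs with hj
  · exact Nat.floor_le (hφ j)
  · rcases Nat.eq_zero_or_pos ⌈φ j⌉₊ with h | h
    · simpa [h] using hφ j
    · exact (Nat.lt_ceil.1 (Nat.sub_lt h one_pos)).le

lemma wholePart_eq_zero (hj : j ≠ o) (h : φ j = 0) : wholePart o φ j = 0 := by
  simp [wholePart, hj, h]

lemma eq_zero_of_fracPart_eq_zero (hj : j ≠ o) (hφ : 0 ≤ φ j) (h : fracPart o φ j = 0) :
    φ j = 0 := by
  simp only [fracPart, wholePart, hj, if_false, sub_eq_zero] at h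
  by_contra hne
  have hceil : 0 < ⌈φ j⌉₊ := Nat.ceil_pos.2 (hφ.lt_of_ne' hne)
  exact (Nat.lt_ceil.1 (Nat.sub_lt hceil one_pos)).ne' h

lemma wholePart_eq_zero_of_fracPart_eq_zero (hφ : 0 ≤ φ) (hj : j ≠ o) (h : fracPart o φ j = 0) :
    wholePart o φ j = 0 :=
  wholePart_eq_zero hj (eq_zero_of_fracPart_eq_zero hj (hφ j) h)

lemma wholePart_add (hφ : 0 ≤ φ) {k : ι → ℕ} (hk : ∀ j ≠ o, φ j = 0 → k j = 0) (j : ι) :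
    wholePart o (fun i => φ i + k i) j = wholePart o φ j + k j := by
  simp only [wholePart]
  split_ifs with hj
  · exact Nat.floor_add_natCast (hφ j) _
  · rw [Nat.ceil_add_natCast (hφ j)]
    rcases (hφ j).eq_or_lt with hzero | hpos
    · simp [hk j hj hzero.symm, ← hzero]
    · have := Nat.ceil_pos.2 hpos
      omega

lemma wholePart_fracPart (hφ : 0 ≤ φ) : wholePart o (fracPart o φ) = 0 := by
  ext j
  have h := wholePart_add (fracPart_nonneg (o := o) hφ)
    (fun i => wholePart_eq_zero_of_fracPart_eq_zero hφ) j
  simp only [fracPart_add_wholePart] at h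
  exact Nat.right_eq_add.1 h

end

variable [Fintype ι]

open Classical in
/-- The support of `φ` together with `o`. -/
noncomputable def extendedSupport (o : ι) (φ : ι → ℝ) : Finset ι :=
  {j | j = o ∨ φ j ≠ 0}

lemma mem_extendedSupport : j ∈ extendedSupport o φ ↔ j = o ∨ φ j ≠ 0 := by
  simp [extendedSupport]

lemma mem_weakCompositions_extendedSupport {k : ι → ℕ} {D ℓ r : ℕ} :
    k ∈ weakCompositions (extendedSupport o φ) D ℓ r ↔
      (∀ j ≠ o, φ j = 0 → k j = 0) ∧ ℓ + D * ∑ j, k j = r := by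
  refine and_congr_left fun _ => forall_congr' fun j => ?_
  rw [mem_extendedSupport]
  tauto

variable [DecidableEq ι]

lemma sum_lt_card_extendedSupport (hφ : wholePart o φ = 0) :
    ∑ j, φ j < (extendedSupport o φ).card := by
  have hlt : φ o < 1 := by
    have := congrFun hφ o
    simpa [wholePart] using this
  have hle : ∀ j, φ j ≤ 1 := fun j => by
    rcases eq_or_ne j o with rfl | hj
    · exact hlt.le
    · have := congrFun hφ j
      rw [wholePart, if_neg hj] at this
      exact_mod_cast Nat.ceil_le.1 (Nat.sub_eq_zero_iff_le.1 this)
  calc ∑ j, φ j = ∑ j ∈ extendedSupport o φ, φ j :=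
        (Finset.sum_subset (Finset.subset_univ _) fun j _ hj =>
          not_not.1 (not_or.1 (mt mem_extendedSupport.2 hj)).2).symm
    _ < ∑ j ∈ extendedSupport o φ, 1 :=
        Finset.sum_lt_sum (fun j _ => hle j) ⟨o, mem_extendedSupport.2 (.inl rfl), hlt⟩
    _ = (extendedSupport o φ).card := by simp

end WholePart

section ShiftStable

variable {ι : Type*} [Fintype ι] {o : ι} {φ : ι → ℝ}

/-- The members of `S` whose coordinate sum is `r / D`. -/
def slice (S : Set (ι → ℝ)) (D r : ℕ) : Set (ι → ℝ) :=
  {φ ∈ S | (D : ℝ) * ∑ j, φ j = r}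

/-- A set of nonnegative vectors in which membership is unaffected by adding natural numbers to the
coordinate `o` and to nonzero coordinates. -/
structure IsShiftStable (o : ι) (S : Set (ι → ℝ)) : Prop where
  nonneg : ∀ φ ∈ S, 0 ≤ φ
  add_mem_iff : ∀ φ : ι → ℝ, 0 ≤ φ → ∀ k : ι → ℕ, (∀ j ≠ o, φ j = 0 → k j = 0) →
    ((fun j => φ j + k j) ∈ S ↔ φ ∈ S)

variable [DecidableEq ι]

/-- The minimal elements of `S` under the shifts of `IsShiftStable`, restricted to those which lie
in some slice. -/
def cells (o : ι) (S : Set (ι → ℝ)) (D : ℕ) : Set (ι → ℝ) :=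
  {b ∈ S | wholePart o b = 0 ∧ ∃ ℓ : ℕ, b ∈ slice S D ℓ}

variable {S : Set (ι → ℝ)} {D ℓ r : ℕ} {b : ι → ℝ}

lemma lt_mul_card_extendedSupport (hD : 0 < D) (hb : wholePart o b = 0) (hℓ : b ∈ slice S D ℓ) :
    ℓ < D * (extendedSupport o b).card := by
  have : (ℓ : ℝ) < D * (extendedSupport o b).card := by
    rw [← hℓ.2]
    exact mul_lt_mul_of_pos_left (sum_lt_card_extendedSupport hb) (Nat.cast_pos.2 hD)
  exact_mod_cast this

lemma finite_cells (hD : 0 < D) (hfin : ∀ r, (slice S D r).Finite) : (cells o S D).Finite := by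
  refine ((Set.finite_Iio (D * Fintype.card ι)).biUnion fun ℓ _ => hfin ℓ).subset ?_
  rintro b ⟨-, hb, ℓ, hℓ⟩
  refine Set.mem_biUnion ?_ hℓ
  exact (lt_mul_card_extendedSupport hD hb hℓ).trans_le
    (Nat.mul_le_mul_left D (Finset.card_le_univ _))

namespace IsShiftStable

lemma fracPart_mem_cells (hS : IsShiftStable o S) (hφ : φ ∈ slice S D r) :
    fracPart o φ ∈ cells o S D := by
  have hφ0 := hS.nonneg φ hφ.1
  have hmem : fracPart o φ ∈ S := by
    rw [← hS.add_mem_iff _ (fracPart_nonneg hφ0) (wholePart o φ)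
      fun j => wholePart_eq_zero_of_fracPart_eq_zero hφ0]
    simpa only [fracPart_add_wholePart] using hφ.1
  refine ⟨hmem, wholePart_fracPart hφ0, r - D * ∑ j, wholePart o φ j, hmem, ?_⟩
  have hsum : (D : ℝ) * ∑ j, fracPart o φ j = r - D * ∑ j, (wholePart o φ j : ℝ) := by
    simp only [fracPart, Finset.sum_sub_distrib, mul_sub, hφ.2]
  have hle : (D : ℝ) * ∑ j, (wholePart o φ j : ℝ) ≤ r := by
    rw [← sub_nonneg, ← hsum]
    exact mul_nonneg D.cast_nonneg (Finset.sum_nonneg fun j _ => fracPart_nonneg hφ0 j)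
  rw [hsum, Nat.cast_sub (by exact_mod_cast hle)]
  push_cast
  rfl

lemma setOf_fracPart_eq (hS : IsShiftStable o S) (hb : wholePart o b = 0)
    (hℓ : b ∈ slice S D ℓ) (r : ℕ) :
    {φ ∈ slice S D r | fracPart o φ = b} =
      (fun k j => b j + (k j : ℝ)) '' weakCompositions (extendedSupport o b) D ℓ r := by
  have hsum (k : ι → ℕ) : (D : ℝ) * ∑ j, (b j + k j) = (ℓ + D * ∑ j, k j : ℕ) := by
    rw [Finset.sum_add_distrib, mul_add, hℓ.2]
    push_cast
    rfl
  ext φ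
  constructor
  · rintro ⟨⟨hφ, hr⟩, rfl⟩
    have hφ_eq : (fun j => fracPart o φ j + (wholePart o φ j : ℝ)) = φ :=
      funext (fracPart_add_wholePart o φ)
    refine ⟨wholePart o φ, mem_weakCompositions_extendedSupport.2
      ⟨fun j => wholePart_eq_zero_of_fracPart_eq_zero (hS.nonneg φ hφ), ?_⟩, hφ_eq⟩
    have := hsum (wholePart o φ)
    simp only [fracPart_add_wholePart, hr] at this
    exact_mod_cast this.symm
  · rintro ⟨k, hk, rfl⟩
    obtain ⟨hk, hr⟩ := mem_weakCompositions_extendedSupport.1 hk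
    have hb0 := hS.nonneg b hℓ.1
    refine ⟨⟨(hS.add_mem_iff b hb0 k hk).2 hℓ.1, by rw [hsum, hr]⟩, funext fun j => ?_⟩
    simp [fracPart, wholePart_add hb0 hk, hb]

lemma isQuasiPolynomial_ncard_setOf_fracPart_eq {K : Type*} [Field K] [CharZero K]
    (hS : IsShiftStable o S) (hD : 0 < D) (hb : b ∈ cells o S D) :
    IsQuasiPolynomial D fun r => ({φ ∈ slice S D r | fracPart o φ = b}.ncard : K) := by
  obtain ⟨-, hb, ℓ, hℓ⟩ := hb
  have hinj : Function.Injective fun (k : ι → ℕ) j => b j + (k j : ℝ) := fun k k' h =>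
    funext fun j => Nat.cast_injective (add_left_cancel (congrFun h j))
  simp only [hS.setOf_fracPart_eq hb hℓ, Set.ncard_image_of_injective _ hinj]
  exact isQuasiPolynomial_ncard_weakCompositions hD (lt_mul_card_extendedSupport hD hb hℓ)

omit [DecidableEq ι] in
theorem isQuasiPolynomial_ncard_slice {K : Type*} [Field K] [CharZero K]
    (hS : IsShiftStable o S) (hD : 0 < D) (hfin : ∀ r, (slice S D r).Finite) :
    IsQuasiPolynomial D fun r => ((slice S D r).ncard : K) := by
  classical
  have hcells := finite_cells (o := o) hD hfin
  have hsum (r : ℕ) : (slice S D r).ncard =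
      ∑ b ∈ hcells.toFinset, {φ ∈ slice S D r | fracPart o φ = b}.ncard := by
    rw [Set.ncard_eq_toFinset_card _ (hfin r), Finset.card_eq_sum_card_fiberwise
      (f := fracPart o) (t := hcells.toFinset)
      fun φ hφ => by simpa using hS.fracPart_mem_cells (by simpa using hφ)]
    refine Finset.sum_congr rfl fun b _ => ?_
    rw [← Set.ncard_coe_finset]
    simp
  simp only [hsum, Nat.cast_sum]
  exact .sum fun b hb => hS.isQuasiPolynomial_ncard_setOf_fracPart_eq hD (by simpa using hb)

end IsShiftStable

end ShiftStable

section LexMax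

/-- Maximise `f 0`, then the remaining functions on the set where that maximum is attained. -/
lemma exists_isMaxOn_toLex {X : Type*} [TopologicalSpace X] {n : ℕ} {f : Fin n → X → ℝ}
    (hf : ∀ i, Continuous (f i)) {K : Set X} (hK : IsCompact K) (hne : K.Nonempty) :
    ∃ x ∈ K, IsMaxOn (fun y => toLex fun i => f i y) K x := by
  induction n generalizing K with
  | zero =>
    obtain ⟨x, hx⟩ := hne
    exact ⟨x, hx, isMaxOn_iff.2 fun y _ => (Subsingleton.elim _ _).le⟩
  | succ n ih =>
    obtain ⟨m, hm, hmax⟩ := hK.exists_isMaxOn hne (hf 0).continuousOn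
    obtain ⟨x, ⟨hxK, hxm⟩, hx⟩ := ih (f := fun i => f i.succ) (fun i => hf i.succ)
      (hK.inter_right (isClosed_singleton.preimage (hf 0))) ⟨m, hm, rfl⟩
    refine ⟨x, hxK, isMaxOn_iff.2 fun y hy => not_lt.1 ?_⟩
    rintro ⟨i, heq, hlt⟩
    cases i using Fin.cases with
    | zero => exact (hlt.trans_le (hmax hy)).ne hxm
    | succ i =>
      have hym : f 0 y = f 0 m := (heq 0 i.succ_pos).symm.trans hxm
      exact (isMaxOn_iff.1 hx y ⟨hy, hym⟩).not_gt
        ⟨i, fun j hj => heq j.succ (Fin.succ_lt_succ_iff.2 hj), hlt⟩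

lemma exists_pos_add_smul_nonneg {ι : Type*} [Finite ι] {φ δ : ι → ℝ} (hφ : 0 ≤ φ)
    (hδ : ∀ j, φ j = 0 → 0 ≤ δ j) : ∃ ε > (0 : ℝ), 0 ≤ φ + ε • δ := by
  have hev : ∀ᶠ ε : ℝ in nhdsWithin 0 (Set.Ioi 0), ∀ j, 0 ≤ φ j + ε * δ j := by
    refine Filter.eventually_all.2 fun j => ?_
    rcases (hφ j).eq_or_lt with hzero | hpos
    · filter_upwards [self_mem_nhdsWithin] with ε hε
      exact add_nonneg (hφ j) (mul_nonneg (le_of_lt hε) (hδ j hzero.symm))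
    · have hcont : Continuous fun ε : ℝ => φ j + ε * δ j := by fun_prop
      refine nhdsWithin_le_nhds (hcont.continuousAt.eventually_const_le ?_)
      simpa using hpos
  obtain ⟨ε, hε, hpos⟩ := (hev.and self_mem_nhdsWithin).exists
  exact ⟨ε, hpos, hε⟩

variable {E : Type*} [AddCommGroup E] [Module ℝ E] {n : ℕ}

/-- `φ` is the lexicographically largest nonnegative vector in its fibre under `A`. -/
def IsLexMaxRep (A : (Fin n → ℝ) →ₗ[ℝ] E) (φ : Fin n → ℝ) : Prop :=
  0 ≤ φ ∧ ∀ ψ, 0 ≤ ψ → A ψ = A φ → toLex ψ ≤ toLex φ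

namespace IsLexMaxRep

lemma eq_of_map_eq {A : (Fin n → ℝ) →ₗ[ℝ] E} {φ ψ : Fin n → ℝ} (hφ : IsLexMaxRep A φ)
    (hψ : IsLexMaxRep A ψ) (h : A φ = A ψ) : φ = ψ :=
  toLex.injective ((hψ.2 φ hφ.1 h).antisymm (hφ.2 ψ hψ.1 h.symm))

lemma exists_map_eq {A : (Fin n → ℝ) →ₗ[ℝ] E} {ψ : Fin n → ℝ} (hψ : 0 ≤ ψ)
    (hsum : ∀ φ, A φ = A ψ → ∑ j, φ j = ∑ j, ψ j) : ∃ φ, IsLexMaxRep A φ ∧ A φ = A ψ := by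
  have hclosed : IsClosed {φ | A φ = A ψ} := by
    convert (LinearMap.ker A).closed_of_finiteDimensional.preimage (continuous_sub_right ψ) using 1
    ext φ
    simp [sub_eq_zero]
  have hK : IsCompact (Set.Icc 0 (fun _ => ∑ j, ψ j) ∩ {φ | A φ = A ψ}) :=
    isCompact_Icc.inter_right hclosed
  have hmem : ∀ φ, 0 ≤ φ → A φ = A ψ → φ ∈ Set.Icc 0 (fun _ => ∑ j, ψ j) ∩ {φ | A φ = A ψ} :=
    fun φ hφ h => ⟨⟨hφ, fun j => hsum φ h ▸
      Finset.single_le_sum (fun i _ => hφ i) (Finset.mem_univ j)⟩, h⟩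
  obtain ⟨φ, ⟨⟨hφ, -⟩, hφA⟩, hmax⟩ :=
    exists_isMaxOn_toLex (fun i => continuous_apply i) hK ⟨ψ, hmem ψ hψ rfl⟩
  exact ⟨φ, ⟨hφ, fun χ hχ hχA => hmax (hmem χ hχ (hχA.trans hφA))⟩, hφA⟩

/-- A lexicographic improvement of `ψ` is nonnegative at the coordinate `0`, so a small multiple of
it can be added to any nonnegative vector which is positive at the nonzero coordinates of `ψ` other
than `0`. -/
lemma of_support {A : (Fin (n + 1) → ℝ) →ₗ[ℝ] E} {φ ψ : Fin (n + 1) → ℝ}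
    (hφ : IsLexMaxRep A φ) (hψ : 0 ≤ ψ) (h : ∀ j ≠ 0, φ j = 0 → ψ j = 0) : IsLexMaxRep A ψ := by
  refine ⟨hψ, fun χ hχ hχA => ?_⟩
  by_contra! hlt
  have hχ0 : ψ 0 ≤ χ 0 := Pi.apply_le_of_toLex hlt.le fun j hj => absurd hj (Fin.not_lt_zero j)
  obtain ⟨i, heq, hi⟩ := hlt
  obtain ⟨ε, hε, hnonneg⟩ := exists_pos_add_smul_nonneg (δ := χ - ψ) hφ.1 fun j hj => by
    rcases eq_or_ne j 0 with rfl | hj0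
    · exact sub_nonneg.2 hχ0
    · simpa [h j hj0 hj] using hχ j
  refine (hφ.2 (φ + ε • (χ - ψ)) hnonneg (by simp [hχA])).not_gt ⟨i, fun j hj => ?_, ?_⟩
  · have := heq j hj
    simp_all
  · simpa using mul_pos hε (sub_pos.2 hi)

end IsLexMaxRep

end LexMax

section Polytope

variable {E : Type*} [AddCommGroup E] [Module ℝ E]

section

variable {ι : Type*} [Fintype ι]

lemma convexHull_range_eq_image_stdSimplex (u : ι → E) :
    convexHull ℝ (Set.range u) = Fintype.linearCombination ℝ u '' stdSimplex ℝ ι := by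
  classical
  rw [← convexHull_rangle_single_eq_stdSimplex, LinearMap.image_convexHull, ← Set.range_comp]
  congr 2
  ext j
  simp [Fintype.linearCombination_apply_single]

lemma smul_stdSimplex [Nonempty ι] {c : ℝ} (hc : 0 ≤ c) :
    c • stdSimplex ℝ ι = {φ | 0 ≤ φ ∧ ∑ j, φ j = c} := by
  classical
  refine Set.Subset.antisymm ?_ ?_
  · rintro _ ⟨w, ⟨hw, hsum⟩, rfl⟩
    exact ⟨fun j => mul_nonneg hc (hw j), by simp [← Finset.mul_sum, hsum]⟩
  · rintro φ ⟨hφ, rfl⟩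
    rcases hc.eq_or_lt with hzero | hpos
    · have hφ_zero : φ = 0 := by
        simpa [Finset.sum_eq_zero_iff_of_nonneg fun j _ => hφ j, funext_iff] using hzero.symm
      exact ⟨Pi.single (Classical.arbitrary ι) 1, single_mem_stdSimplex ℝ _, by simp [hφ_zero]⟩
    · refine ⟨(∑ j, φ j)⁻¹ • φ, ⟨fun j => mul_nonneg (inv_nonneg.2 hc) (hφ j), ?_⟩,
        smul_inv_smul₀ hpos.ne' φ⟩
      simp [← Finset.mul_sum, hpos.ne']

lemma smul_convexHull_range [Nonempty ι] (u : ι → E) {c : ℝ} (hc : 0 ≤ c) :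
    c • convexHull ℝ (Set.range u) =
      (fun φ : ι → ℝ => ∑ j, φ j • u j) '' {φ | 0 ≤ φ ∧ ∑ j, φ j = c} := by
  rw [convexHull_range_eq_image_stdSimplex, ← image_smul_set, smul_stdSimplex hc]
  rfl

end

/-- The map `φ ↦ (∑ j, φ j, ∑ j, φ j • u j)`: the coefficient vector of a point `x` of the dilate
`c • convexHull ℝ (range u)` is sent to the point `(c, x)` of the cone over that polytope. -/
noncomputable def homogenization {n : ℕ} (u : Fin n → E) : (Fin n → ℝ) →ₗ[ℝ] ℝ × E :=
  Fintype.linearCombination ℝ fun j => (1, u j)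

lemma homogenization_apply {n : ℕ} (u : Fin n → E) (φ : Fin n → ℝ) :
    homogenization u φ = (∑ j, φ j, ∑ j, φ j • u j) := by
  simp [homogenization, Fintype.linearCombination_apply, Prod.ext_iff, Prod.fst_sum, Prod.snd_sum]

variable {n : ℕ}

/-- The lexicographically largest coefficient vectors of the points of `Λ` that lie in a dilate of
the convex hull of the `u j`, one for each point and each dilation factor. -/
def latticeReps (u : Fin n → E) (Λ : Submodule ℤ E) : Set (Fin n → ℝ) :=
  {φ | IsLexMaxRep (homogenization u) φ ∧ ∑ j, φ j • u j ∈ Λ}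

lemma isShiftStable_latticeReps {u : Fin (n + 1) → E} {Λ : Submodule ℤ E} (hu : ∀ j, u j ∈ Λ) :
    IsShiftStable 0 (latticeReps u Λ) where
  nonneg φ hφ := hφ.1.1
  add_mem_iff φ hφ k hk := by
    have hsum : ∑ j, (φ j + k j) • u j = ∑ j, φ j • u j + ∑ j, k j • u j := by
      simp [add_smul, Finset.sum_add_distrib, Nat.cast_smul_eq_nsmul]
    have hmem : ∑ j, k j • u j ∈ Λ := sum_mem fun j _ => nsmul_mem (hu j) _
    refine and_congr ⟨fun h => h.of_support hφ fun j _ hj => ?_, fun h => ?_⟩ ?_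
    · exact ((add_eq_zero_iff_of_nonneg (hφ j) (k j).cast_nonneg).1 hj).1
    · exact h.of_support (fun j => add_nonneg (hφ j) (k j).cast_nonneg) fun j hj0 hj => by
        simp [hj, hk j hj0 hj]
    · rw [hsum, Submodule.add_mem_iff_left Λ hmem]

lemma bijOn_slice_latticeReps {P : Set E} {D : ℕ} (hD : 0 < D) {u : Fin (n + 1) → E}
    (hP : (D : ℝ) • P = convexHull ℝ (Set.range u)) (Λ : Submodule ℤ E) (r : ℕ) :
    Set.BijOn (fun φ => ∑ j, φ j • u j) (slice (latticeReps u Λ) D r) ((r : ℝ) • P ∩ Λ) := by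
  have hD' : (D : ℝ) ≠ 0 := Nat.cast_ne_zero.2 hD.ne'
  have hlevel (φ : Fin (n + 1) → ℝ) : (D : ℝ) * ∑ j, φ j = r ↔ ∑ j, φ j = r / D := by
    rw [eq_div_iff hD', mul_comm]
  have hrP : (r : ℝ) • P =
      (fun φ : Fin (n + 1) → ℝ => ∑ j, φ j • u j) '' {φ | 0 ≤ φ ∧ ∑ j, φ j = (r : ℝ) / D} := by
    rw [← smul_convexHull_range u (by positivity), ← hP, smul_smul, div_mul_cancel₀ _ hD']
  rw [hrP]
  refine ⟨?_, ?_, ?_⟩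
  · rintro φ ⟨⟨hφ, hΛ⟩, hr⟩
    exact ⟨⟨φ, ⟨hφ.1, (hlevel φ).1 hr⟩, rfl⟩, hΛ⟩
  · rintro φ ⟨⟨hφ, -⟩, hφr⟩ ψ ⟨⟨hψ, -⟩, hψr⟩ h
    refine hφ.eq_of_map_eq hψ ?_
    rw [homogenization_apply, homogenization_apply, (hlevel φ).1 hφr, (hlevel ψ).1 hψr]
    exact congrArg _ h
  · rintro _ ⟨⟨ψ, ⟨hψ, hψr⟩, rfl⟩, hΛ⟩
    simp only at hΛ ⊢
    obtain ⟨φ, hφ, h⟩ := IsLexMaxRep.exists_map_eq (A := homogenization u) hψ fun φ h => by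
      simpa [homogenization_apply] using congrArg Prod.fst h
    obtain ⟨hsum, hpt⟩ : ∑ j, φ j = ∑ j, ψ j ∧ ∑ j, φ j • u j = ∑ j, ψ j • u j := by
      simpa [homogenization_apply] using h
    exact ⟨φ, ⟨⟨hφ, hpt ▸ hΛ⟩, (hlevel φ).2 (hsum.trans hψr)⟩, hpt⟩

theorem isQuasiPolynomial_ncard_smul_inter {K : Type*} [Field K] [CharZero K]
    {P : Set E} {Λ : Submodule ℤ E} {D : ℕ} (hD : 0 < D) {s : Set E} (hs : s.Finite) (hsΛ : s ⊆ Λ)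
    (hP : (D : ℝ) • P = convexHull ℝ s) (hfin : ∀ r : ℕ, ((r : ℝ) • P ∩ Λ).Finite) :
    IsQuasiPolynomial D fun r => (((r : ℝ) • P ∩ Λ).ncard : K) := by
  obtain ⟨m, u, -, rfl⟩ := hs.fin_param
  cases m with
  | zero =>
    have hPempty : P = ∅ := by simpa using hP
    simpa [hPempty] using IsQuasiPolynomial.zero (R := K) D
  | succ n =>
    have hbij := bijOn_slice_latticeReps hD hP Λ
    simp only [← fun r => (hbij r).ncard_eq]
    exact (isShiftStable_latticeReps fun j => hsΛ ⟨j, rfl⟩).isQuasiPolynomial_ncard_slice hD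
      fun r => (hbij r).finite_iff_finite.2 (hfin r)

end Polytope

section IntegerPoints

variable {ι : Type*} [Finite ι]

lemma coe_span_range_basisFun :
    (Submodule.span ℤ (Set.range (Pi.basisFun ℝ ι)) : Set (ι → ℝ)) =
      Set.range fun (x : ι → ℤ) i => (x i : ℝ) := by
  ext x
  rw [SetLike.mem_coe, Module.Basis.mem_span_iff_repr_mem]
  simp only [Pi.basisFun_repr, algebraMap_int_eq, Set.mem_range, Int.coe_castRingHom, funext_iff]
  exact Classical.skolem

lemma ncard_setOf_intCast_mem (Q : Set (ι → ℝ)) :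
    {x : ι → ℤ | (fun i => (x i : ℝ)) ∈ Q}.ncard =
      (Q ∩ Submodule.span ℤ (Set.range (Pi.basisFun ℝ ι))).ncard := by
  have hinj : Function.Injective fun (x : ι → ℤ) i => (x i : ℝ) := fun x y h =>
    funext fun i => Int.cast_injective (congrFun h i)
  rw [coe_span_range_basisFun, ← Set.image_preimage_eq_inter_range,
    Set.ncard_image_of_injective _ hinj]
  rfl

end IntegerPoints

theorem isQuasiPolynomial_ncard_integerPoints {K : Type*} [Field K] [CharZero K] {d D : ℕ}
    (hD : 0 < D) {P : Set (Fin d → ℝ)} (hP : IsLatticePolytope d ((D : ℝ) • P)) :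
    IsQuasiPolynomial D fun r =>
      (Set.ncard {x : Fin d → ℤ | (fun i => (x i : ℝ)) ∈ (r : ℝ) • P} : K) := by
  obtain ⟨V, hV⟩ := hP
  have hfin := V.finite_toSet.image fun (v : Fin d → ℤ) i => (v i : ℝ)
  have hbdd : Bornology.IsBounded P := by
    rw [← inv_smul_smul₀ (Nat.cast_ne_zero.2 hD.ne' : (D : ℝ) ≠ 0) P, hV]
    exact (hfin.isCompact_convexHull ℝ).isBounded.smul₀ _
  simp only [ncard_setOf_intCast_mem]
  refine isQuasiPolynomial_ncard_smul_inter hD hfin ?_ hV fun r =>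
    ZSpan.setFinite_inter _ (hbdd.smul₀ _)
  rw [coe_span_range_basisFun]
  exact Set.image_subset_range _ _

lemma exists_pos_forall_intCast_eq_mul (s : Finset ℚ) :
    ∃ k : ℕ, 0 < k ∧ ∀ x ∈ s, ∃ m : ℤ, (m : ℚ) = k * x := by
  refine ⟨s.lcm Rat.den, Nat.pos_of_ne_zero ?_, fun x hx => ?_⟩
  · simp [Finset.lcm_eq_zero_iff]
  · obtain ⟨c, hc⟩ := Finset.dvd_lcm (f := Rat.den) hx
    refine ⟨x.num * c, ?_⟩
    rw [hc]
    push_cast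
    rw [← Rat.den_mul_eq_num]
    ring

lemma exists_pos_isLatticePolytope_smul {d : ℕ} (V : Finset (Fin d → ℚ)) :
    ∃ k : ℕ, 0 < k ∧ IsLatticePolytope d
      ((k : ℝ) • convexHull ℝ ((fun v : Fin d → ℚ => fun i => (v i : ℝ)) '' V)) := by
  classical
  obtain ⟨k, hk, hint⟩ :=
    exists_pos_forall_intCast_eq_mul (V.biUnion fun v => Finset.univ.image v)
  choose! m hm using hint
  refine ⟨k, hk, V.image fun v i => m (v i), ?_⟩
  rw [← convexHull_smul, ← Set.image_smul, Set.image_image, Finset.coe_image, Set.image_image]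
  refine congrArg _ (Set.image_congr fun v hv => funext fun i => ?_)
  have := hm (v i) (Finset.mem_biUnion.2 ⟨v, hv, Finset.mem_image_of_mem v (Finset.mem_univ i)⟩)
  simpa using congrArg (fun x : ℚ => (x : ℝ)) this.symm

theorem ehrhart_quasipolynomial_period_general
    (d : ℕ) (P : Set (Fin d → ℝ))
    (hP : ∃ V : Finset (Fin d → ℚ),
      P = convexHull ℝ ((fun v : Fin d → ℚ => fun i => ((v i : ℝ))) '' ↑V)) :
    (∃ (q : ℕ) (hq : 0 < q),
      q ∣ sInf {k : ℕ | 1 ≤ k ∧ IsLatticePolytope d ((k : ℝ) • P)} ∧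
      ∃ g : Fin q → Polynomial ℚ,
        ∀ r : ℕ,
          (Set.ncard {x : Fin d → ℤ | (fun i => (x i : ℝ)) ∈ (r : ℝ) • P} : ℚ)
            = (g ⟨r % q, Nat.mod_lt r hq⟩).eval (r : ℚ)) ∧
    (IsLatticePolytope d P →
      ∃ p : Polynomial ℚ,
        ∀ r : ℕ,
          (Set.ncard {x : Fin d → ℤ | (fun i => (x i : ℝ)) ∈ (r : ℝ) • P} : ℚ)
            = p.eval (r : ℚ)) := by
  obtain ⟨V, rfl⟩ := hP
  constructor
  · obtain ⟨hpos, hlattice⟩ := Nat.sInf_mem (exists_pos_isLatticePolytope_smul V)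
    obtain ⟨g, hg⟩ := isQuasiPolynomial_ncard_integerPoints (K := ℚ) hpos hlattice
    exact ⟨_, hpos, dvd_rfl, fun i => g i, hg⟩
  · intro hlattice
    obtain ⟨g, hg⟩ := isQuasiPolynomial_ncard_integerPoints (K := ℚ) one_pos
      (by simpa using hlattice)
    exact ⟨g 0, fun r => by simpa only [Nat.mod_one] using hg r⟩

/-- Ehrhart's theorem, part 2: for a rational polytope `P ⊆ ℝ^d` of dimension `d`,
the counting function `L(P, r) = Card(rP ∩ ℤ^d)` agrees with a quasi-polynomial whose
period divides `𝒟(P) = min{n ≥ 1 : nP is a lattice polytope}`; in particular, if `P`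
is itself a lattice polytope then `L(P, r)` is a polynomial in `r` with rational
coefficients. -/
theorem ehrhart_quasipolynomial_period
    (d : ℕ) (hd : 0 < d) (P : Set (Fin d → ℝ))
    (hP : ∃ V : Finset (Fin d → ℚ),
      P = convexHull ℝ ((fun v : Fin d → ℚ => fun i => ((v i : ℝ))) '' ↑V))
    (hdim : affineSpan ℝ P = ⊤) :
    (∃ (q : ℕ) (hq : 0 < q),
      q ∣ sInf {k : ℕ | 1 ≤ k ∧ IsLatticePolytope d ((k : ℝ) • P)} ∧
      ∃ g : Fin q → Polynomial ℚ,
        ∀ r : ℕ,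
          (Set.ncard {x : Fin d → ℤ | (fun i => (x i : ℝ)) ∈ (r : ℝ) • P} : ℚ)
            = (g ⟨r % q, Nat.mod_lt r hq⟩).eval (r : ℚ)) ∧
    (IsLatticePolytope d P →
      ∃ p : Polynomial ℚ,
        ∀ r : ℕ,
          (Set.ncard {x : Fin d → ℤ | (fun i => (x i : ℝ)) ∈ (r : ℝ) • P} : ℚ)
            = p.eval (r : ℚ)) :=
  ehrhart_quasipolynomial_period_general d P hP
end
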